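/- Let d ≥ 1 and let r ≥ 1 be an integer. Let η : ℝ^d → ℝ be a bounded measurable function supported in the unit ball such that ∫ η(y) P(y) dy = 0 for every polynomial P of degree at most r. Let ψ : ℝ^d → ℝ be of class C^r with ‖ψ‖_{C^r} < ∞. For m ≥ 0, z ∈ ℝ^d set η_z^m(y) = 2^{md/2} η(2^m (y−z)), and for λ ∈ (0,1], x ∈ ℝ^d set ψ_x^λ(y) = λ^{−d} ψ(λ^{−1}(y−x)). Then there is a constant C depending only on d, r, ‖η‖_∞ and ‖ψ‖_{C^r} such that for all m ≥ 0 and λ ∈ (0,1] with 2^{−m} ≤ λ, and all x, z ∈ ℝ^d: |∫ η_z^m(y) ψ_x^λ(y) dy| ≤ C λ^{−d−r} 2^{−rm − md/2}. (Cancellation estimate for wavelets with vanishing moments against rescaled test functions.) -/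

import Mathlib

/-!
The affine substitution `u = 2^m (y - z)` turns the pairing into
`2^{-md/2} λ^{-d} ∫ η(u) ψ(a + s u) du` with `a = λ⁻¹ (z - x)` and `s = λ⁻¹ 2^{-m}`, so everything
reduces to `|∫ η(u) ψ(a + s u) du| ≤ C s^r` (`abs_integral_mul_comp_le`). The Taylor polynomial of
`ψ` at `a` of degree `r - 1`, evaluated at `s u`, is a linear combination of monomials in `u` of
degree `< r`, hence is annihilated by `η` (`integral_mul_multilinear_eq_zero`). On the unit ball,
which contains the support of `η`, the Taylor remainder is at most `‖ψ‖_{C^r} s^r`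
(`abs_sub_taylor_le`). This gives `C = ‖η‖_∞ ‖ψ‖_{C^r} vol(B(0,1))`.
-/

open MeasureTheory Metric Set Filter

noncomputable section

/-- Euclidean space `ℝ^d`. -/
abbrev Rd (d : ℕ) := EuclideanSpace ℝ (Fin d)

/-- The rescaled and recentred test function `φ_x^λ (y) = λ^{-d} φ(λ⁻¹(y-x))`. -/
def scal {d : ℕ} (φ : Rd d → ℝ) (x : Rd d) (l : ℝ) : Rd d → ℝ :=
  fun y => (l ^ d)⁻¹ * φ (l⁻¹ • (y - x))

/-- The set `B_r` of `C^r` test functions supported in the unit ball with `C^r` norm at most 1. -/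
def Br (d r : ℕ) : Set (Rd d → ℝ) :=
  {φ | ContDiff ℝ (r : ℕ∞) φ ∧ tsupport φ ⊆ closedBall (0 : Rd d) 1 ∧
    ∀ i ≤ r, ∀ y, ‖iteratedFDeriv ℝ i φ y‖ ≤ 1}

/-- A smooth compactly supported function. -/
def IsTestFunction {d : ℕ} (f : Rd d → ℝ) : Prop :=
  ContDiff ℝ (⊤ : ℕ∞) f ∧ HasCompactSupport f

/-- The local continuity estimate making a linear functional on functions a distribution:
on every compact set it is bounded by some `C^k` norm of the test function. -/
def IsDistribution {d : ℕ} (u : (Rd d → ℝ) →ₗ[ℝ] ℝ) : Prop :=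
  ∀ K : Set (Rd d), IsCompact K → ∃ C : ℝ, ∃ k : ℕ, ∀ f : Rd d → ℝ,
    IsTestFunction f → tsupport f ⊆ K → ∀ B : ℝ,
      (∀ i ≤ k, ∀ y, ‖iteratedFDeriv ℝ i f y‖ ≤ B) → |u f| ≤ C * B

/-- Total weight `|k|` of a multiindex. -/
def wt {d : ℕ} (k : Fin d → ℕ) : ℕ := ∑ j, k j

/-- Factorial `k!` of a multiindex. -/
def mfac {d : ℕ} (k : Fin d → ℕ) : ℕ := ∏ j, (k j).factorial

/-- The monomial `x^k = ∏_j x_j^{k_j}`. -/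
def mono {d : ℕ} (k : Fin d → ℕ) (x : Rd d) : ℝ := ∏ j, (x j) ^ (k j)

/-- Partial derivative in the `j`-th coordinate direction. -/
def pderiv1 {d : ℕ} (j : Fin d) (f : Rd d → ℝ) : Rd d → ℝ :=
  fun x => fderiv ℝ f x (EuclideanSpace.single j (1 : ℝ))

/-- Iterated partial derivative in the `j`-th coordinate direction. -/
def pderivPow {d : ℕ} (j : Fin d) : ℕ → (Rd d → ℝ) → Rd d → ℝ
  | 0 => fun f => f
  | n + 1 => fun f => pderiv1 j (pderivPow j n f)

/-- The multiindex partial derivative `D^k f`. -/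
def Dk {d : ℕ} (k : Fin d → ℕ) (f : Rd d → ℝ) : Rd d → ℝ :=
  ((List.ofFn fun j : Fin d => pderivPow j (k j)).foldr (· ∘ ·) id) f

/-- A multilinear form restricted to the diagonal is a homogeneous polynomial: the coefficients
are indexed by `p : Fin k → Fin d`, which contributes the monomial whose `j`-th exponent is the
number of occurrences of `j` in `p`. -/
lemma multilinear_diag_eq_sum_mono {d k : ℕ} (L : (Rd d) [×k]→L[ℝ] ℝ) (u : Rd d) :
    L (fun _ => u) = ∑ p : Fin k → Fin d,
      mono (fun j => (Finset.univ.filter fun i => p i = j).card) u *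
        L (fun i => EuclideanSpace.single (p i) (1 : ℝ)) := by
  have hu : u = ∑ j, u j • EuclideanSpace.single j (1 : ℝ) := by
    ext i
    simp [Pi.single_apply]
  have h1 : L (fun _ => u) = L (fun _ => ∑ j, u j • EuclideanSpace.single j (1 : ℝ)) := by
    rw [← hu]
  rw [h1, L.map_sum]
  refine Finset.sum_congr rfl fun p _ => ?_
  rw [L.map_smul_univ (fun i => u (p i)), smul_eq_mul]
  congr 1
  unfold mono
  rw [← Finset.prod_fiberwise' Finset.univ p (fun j => u j)]
  simp

lemma wt_fiber_card {d k : ℕ} (p : Fin k → Fin d) :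
    wt (fun j => (Finset.univ.filter fun i => p i = j).card) = k := by
  unfold wt
  rw [← Finset.card_eq_sum_card_fiberwise (fun _ _ => Finset.mem_coe.2 (Finset.mem_univ _))]
  simp

lemma continuous_mono {d : ℕ} (k : Fin d → ℕ) : Continuous (mono k) := by
  unfold mono
  fun_prop

lemma integrable_mul_of_continuous {d : ℕ} {η f : Rd d → ℝ} {Mη : ℝ} (hη : Measurable η)
    (hb : ∀ y, |η y| ≤ Mη) (hs : Function.support η ⊆ closedBall 0 1) (hf : Continuous f) :
    Integrable (fun y => η y * f y) := by
  have h1 : IntegrableOn f (closedBall (0 : Rd d) 1) :=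
    hf.continuousOn.integrableOn_compact (isCompact_closedBall _ _)
  have h2 : IntegrableOn (fun y => η y * f y) (closedBall (0 : Rd d) 1) :=
    Integrable.bdd_mul h1 hη.aestronglyMeasurable (Eventually.of_forall hb)
  refine (integrableOn_iff_integrable_of_support_subset ?_).1 h2
  exact (Function.support_mul_subset_left _ _).trans hs

/-- Vanishing moments up to order `r` annihilate every homogeneous polynomial of degree `k ≤ r`. -/
lemma integral_mul_multilinear_eq_zero {d r k : ℕ} {η : Rd d → ℝ} {Mη : ℝ} (hη : Measurable η)
    (hb : ∀ y, |η y| ≤ Mη) (hs : Function.support η ⊆ closedBall 0 1)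
    (hm : ∀ k : Fin d → ℕ, wt k ≤ r → ∫ y, η y * mono k y = 0) (hk : k ≤ r)
    (L : (Rd d) [×k]→L[ℝ] ℝ) : ∫ u, η u * L (fun _ => u) = 0 := by
  simp_rw [multilinear_diag_eq_sum_mono, Finset.mul_sum, ← mul_assoc]
  rw [integral_finsetSum]
  · refine Finset.sum_eq_zero fun p _ => ?_
    rw [integral_mul_const, hm _ ((wt_fiber_card p).le.trans hk), zero_mul]
  · intro p _
    exact (integrable_mul_of_continuous hη hb hs (continuous_mono _)).mul_const _

/-- Taylor's estimate for the polynomial of degree `n`, with the factor `1 / (n + 1)!` bounded by `1`. -/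
lemma abs_sub_taylor_le {d n : ℕ} {ψ : Rd d → ℝ} {M : ℝ}
    (hψ : ContDiff ℝ ((n + 1 : ℕ) : ℕ∞) ψ) (hM : ∀ y, ‖iteratedFDeriv ℝ (n + 1) ψ y‖ ≤ M)
    (a v : Rd d) :
    |ψ (a + v) - ∑ k ∈ Finset.range (n + 1),
      (k.factorial : ℝ)⁻¹ * iteratedFDeriv ℝ k ψ a (fun _ => v)| ≤ M * ‖v‖ ^ (n + 1) := by
  have hT := map_add_eq_sum_add_integral_iteratedFDeriv (f := ψ) (x := a) (y := v) (n := n)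
    (fun t _ => by simpa using hψ.contDiffAt)
  have hM0 : 0 ≤ M := (norm_nonneg _).trans (hM a)
  have hI : ‖∫ t in (0 : ℝ)..1, (1 - t) ^ n • iteratedFDeriv ℝ (n + 1) ψ (a + t • v)
      (fun _ => v)‖ ≤ M * ‖v‖ ^ (n + 1) * |(1 : ℝ) - 0| := by
    refine intervalIntegral.norm_integral_le_of_norm_le_const fun t ht => ?_
    rw [uIoc_of_le zero_le_one] at ht
    have h1 : ‖(1 - t) ^ n‖ ≤ 1 := by
      rw [norm_pow, Real.norm_of_nonneg (by linarith [ht.2])]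
      exact pow_le_one₀ (by linarith [ht.2]) (by linarith [ht.1])
    have h2 : ‖iteratedFDeriv ℝ (n + 1) ψ (a + t • v) (fun _ => v)‖ ≤ M * ‖v‖ ^ (n + 1) := by
      refine ((iteratedFDeriv ℝ (n + 1) ψ (a + t • v)).le_opNorm _).trans ?_
      simp only [Finset.prod_const, Finset.card_univ, Fintype.card_fin]
      gcongr
      exact hM _
    rw [norm_smul]
    calc _ ≤ 1 * (M * ‖v‖ ^ (n + 1)) := by gcongr
      _ = _ := one_mul _
  simp only [smul_eq_mul] at hT hI
  rw [hT, add_sub_cancel_left, abs_mul, ← Real.norm_eq_abs (∫ t in (0 : ℝ)..1, _)]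
  have hfac : |((n.factorial : ℝ)⁻¹)| ≤ 1 := by
    rw [abs_of_nonneg (by positivity)]
    exact inv_le_one_of_one_le₀ (by exact_mod_cast n.factorial_pos)
  calc _ ≤ 1 * (M * ‖v‖ ^ (n + 1) * |(1 : ℝ) - 0|) := by gcongr
    _ = _ := by simp

/-- The cancellation estimate in the coordinates in which the wavelet has unit scale. -/
lemma abs_integral_mul_comp_le {d r : ℕ} (hr : 1 ≤ r) {η ψ : Rd d → ℝ} {Mη Mψ : ℝ}
    (hη : Measurable η) (hb : ∀ y, |η y| ≤ Mη) (hs : Function.support η ⊆ closedBall 0 1)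
    (hm : ∀ k : Fin d → ℕ, wt k ≤ r → ∫ y, η y * mono k y = 0)
    (hψ : ContDiff ℝ (r : ℕ∞) ψ) (hM : ∀ y, ‖iteratedFDeriv ℝ r ψ y‖ ≤ Mψ)
    (a : Rd d) {s : ℝ} (hs0 : 0 ≤ s) :
    |∫ u, η u * ψ (a + s • u)| ≤
      Mη * Mψ * volume.real (closedBall (0 : Rd d) 1) * s ^ r := by
  obtain ⟨n, rfl⟩ : ∃ n, r = n + 1 := ⟨r - 1, by omega⟩
  have hη0 : 0 ≤ Mη := (abs_nonneg _).trans (hb 0)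
  have hψ0 : 0 ≤ Mψ := (norm_nonneg _).trans (hM 0)
  set T : Rd d → ℝ := fun u => ∑ k ∈ Finset.range (n + 1),
    (k.factorial : ℝ)⁻¹ * iteratedFDeriv ℝ k ψ a (fun _ => s • u) with hT
  have hTc : Continuous T := by
    refine continuous_finsetSum _ fun k _ => continuous_const.mul ?_
    exact (iteratedFDeriv ℝ k ψ a).cont.comp (by fun_prop)
  have hψc : Continuous fun u => ψ (a + s • u) := hψ.continuous.comp (by fun_prop)
  have hT0 : ∫ u, η u * T u = 0 := by
    have hTu : ∀ u, η u * T u = ∑ k ∈ Finset.range (n + 1),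
        η u * iteratedFDeriv ℝ k ψ a (fun _ => u) * ((k.factorial : ℝ)⁻¹ * s ^ k) := by
      intro u
      simp only [hT, Finset.mul_sum]
      refine Finset.sum_congr rfl fun k _ => ?_
      rw [(iteratedFDeriv ℝ k ψ a).map_smul_univ (fun _ => s) (fun _ => u)]
      simp
      ring
    simp_rw [hTu]
    rw [integral_finsetSum]
    · refine Finset.sum_eq_zero fun k hk => ?_
      rw [integral_mul_const, integral_mul_multilinear_eq_zero hη hb hs hm
        (Finset.mem_range.1 hk).le, zero_mul]
    · intro k _
      refine Integrable.mul_const ?_ _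
      exact integrable_mul_of_continuous hη hb hs
        ((iteratedFDeriv ℝ k ψ a).cont.comp (by fun_prop))
  have hsub : ∫ u, η u * ψ (a + s • u) = ∫ u, η u * (ψ (a + s • u) - T u) := by
    simp_rw [mul_sub]
    rw [integral_sub (integrable_mul_of_continuous hη hb hs hψc)
      (integrable_mul_of_continuous hη hb hs hTc), hT0, sub_zero]
  have hball : ∫ u, η u * (ψ (a + s • u) - T u) =
      ∫ u in closedBall (0 : Rd d) 1, η u * (ψ (a + s • u) - T u) :=
    (setIntegral_eq_integral_of_forall_compl_eq_zero fun u hu => by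
      rw [Function.notMem_support.1 fun h => hu (hs h), zero_mul]).symm
  rw [hsub, hball, ← Real.norm_eq_abs]
  calc _ ≤ Mη * (Mψ * s ^ (n + 1)) * volume.real (closedBall (0 : Rd d) 1) := by
        refine norm_setIntegral_le_of_norm_le_const measure_closedBall_lt_top fun u hu => ?_
        rw [norm_mul, Real.norm_eq_abs, Real.norm_eq_abs]
        have hu1 : ‖u‖ ≤ 1 := by simpa using hu
        have hle : ‖s • u‖ ≤ s := by
          rw [norm_smul, Real.norm_of_nonneg hs0]
          exact mul_le_of_le_one_right hs0 hu1
        gcongr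
        · exact hb u
        · refine (abs_sub_taylor_le hψ hM a (s • u)).trans ?_
          gcongr
    _ = _ := by ring

/-- The change of variables `u = 2^m (y - z)`. -/
lemma integral_wavelet_scal_eq {d : ℕ} (η ψ : Rd d → ℝ) (m : ℕ) (l : ℝ) (x z : Rd d) :
    ∫ y, ((2 : ℝ) ^ ((m : ℝ) * d / 2) * η (((2 : ℝ) ^ m) • (y - z))) * scal ψ x l y =
      (2 : ℝ) ^ ((m : ℝ) * d / 2) * (l ^ d)⁻¹ * (((2 : ℝ) ^ m) ^ d)⁻¹ *
        ∫ u, η u * ψ (l⁻¹ • (z - x) + (l⁻¹ * (2 : ℝ)⁻¹ ^ m) • u) := by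
  set F : Rd d → ℝ := fun u => η u * ψ (l⁻¹ • (z - x) + (l⁻¹ * (2 : ℝ)⁻¹ ^ m) • u) with hF
  have hpt : ∀ y, ((2 : ℝ) ^ ((m : ℝ) * d / 2) * η (((2 : ℝ) ^ m) • (y - z))) * scal ψ x l y =
      (2 : ℝ) ^ ((m : ℝ) * d / 2) * (l ^ d)⁻¹ * F ((2 : ℝ) ^ m • (y - z)) := by
    intro y
    have hy : l⁻¹ • (z - x) + (l⁻¹ * (2 : ℝ)⁻¹ ^ m) • ((2 : ℝ) ^ m • (y - z)) =
        l⁻¹ • (y - x) := by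
      have h2 : l⁻¹ * (2 : ℝ)⁻¹ ^ m * 2 ^ m = l⁻¹ := by
        rw [mul_assoc, ← mul_pow]
        norm_num
      rw [smul_smul, h2, ← smul_add]
      congr 1
      abel
    simp only [hF, scal]
    rw [hy]
    ring
  simp_rw [hpt]
  rw [integral_const_mul, integral_sub_right_eq_self (fun y => F ((2 : ℝ) ^ m • y)) z,
    Measure.integral_comp_smul_of_nonneg volume F ((2 : ℝ) ^ m) (hR := by positivity),
    finrank_euclideanSpace_fin, smul_eq_mul]
  ring

/-- **Cancellation estimate for wavelets with vanishing moments**: if `η` is bounded,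
supported in the unit ball and kills all polynomials of degree `≤ r`, and `ψ ∈ C^r`,
then for `2^{-m} ≤ λ ≤ 1`,
`|∫ η_z^m ψ_x^λ| ≤ C λ^{-d-r} 2^{-rm - md/2}`, with `C = C(d, r, ‖η‖_∞, ‖ψ‖_{C^r})`. -/
theorem wavelet_cancellation
    (d r : ℕ) (hd : 1 ≤ d) (hr : 1 ≤ r) (Mη Mψ : ℝ) :
    ∃ C : ℝ, 0 ≤ C ∧
      ∀ (η ψ : Rd d → ℝ),
        Measurable η → (∀ y, |η y| ≤ Mη) →
        Function.support η ⊆ Metric.closedBall 0 1 →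
        (∀ k : Fin d → ℕ, wt k ≤ r → ∫ y, η y * mono k y = 0) →
        ContDiff ℝ (r : ℕ∞) ψ →
        (∀ i ≤ r, ∀ y, ‖iteratedFDeriv ℝ i ψ y‖ ≤ Mψ) →
        ∀ (m : ℕ) (l : ℝ) (x z : Rd d), 0 < l → l ≤ 1 → (2 : ℝ)⁻¹ ^ m ≤ l →
          |∫ y, ((2 : ℝ) ^ ((m : ℝ) * d / 2) * η (((2 : ℝ) ^ m) • (y - z))) *
              scal ψ x l y|
            ≤ C * l ^ (-(d : ℝ) - r) *
              (2 : ℝ) ^ (-(r : ℝ) * m - (m : ℝ) * d / 2) := by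
  refine ⟨|Mη| * |Mψ| * volume.real (closedBall (0 : Rd d) 1), by positivity, ?_⟩
  intro η ψ hη hb hs hm hψ hM m l x z hl _ _
  have key := abs_integral_mul_comp_le hr hη hb hs hm hψ (hM r le_rfl) (l⁻¹ • (z - x))
    (s := l⁻¹ * (2 : ℝ)⁻¹ ^ m) (by positivity)
  rw [integral_wavelet_scal_eq, abs_mul, abs_of_nonneg (a := _ * _ * _) (by positivity)]
  rw [abs_of_nonneg ((abs_nonneg _).trans (hb 0)),
    abs_of_nonneg ((norm_nonneg _).trans (hM r le_rfl 0))]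
  set V := volume.real (closedBall (0 : Rd d) 1)
  have hpow : (2 : ℝ) ^ ((m : ℝ) * d / 2) * (l ^ d)⁻¹ * (((2 : ℝ) ^ m) ^ d)⁻¹ *
      (l⁻¹ * (2 : ℝ)⁻¹ ^ m) ^ r =
      l ^ (-(d : ℝ) - r) * (2 : ℝ) ^ (-(r : ℝ) * m - (m : ℝ) * d / 2) := by
    have e1 : l ^ (-(d : ℝ) - r) = (l ^ d)⁻¹ * (l ^ r)⁻¹ := by
      rw [Real.rpow_sub hl, Real.rpow_neg hl.le, Real.rpow_natCast, Real.rpow_natCast,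
        div_eq_mul_inv]
    have e2 : (2 : ℝ) ^ (-(r : ℝ) * m - (m : ℝ) * d / 2) =
        (2 : ℝ) ^ ((m : ℝ) * d / 2) * (((2 : ℝ) ^ m) ^ d)⁻¹ * ((2 : ℝ)⁻¹ ^ m) ^ r := by
      have h2 : (0 : ℝ) < 2 := by norm_num
      rw [inv_pow, inv_pow, ← pow_mul, ← pow_mul, ← Real.rpow_natCast, ← Real.rpow_natCast,
        ← Real.rpow_neg h2.le, ← Real.rpow_neg h2.le, ← Real.rpow_add h2, ← Real.rpow_add h2]
      congr 1
      push_cast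
      ring
    rw [e1, e2, mul_pow, inv_pow l]
    ring
  calc _ ≤ (2 : ℝ) ^ ((m : ℝ) * d / 2) * (l ^ d)⁻¹ * (((2 : ℝ) ^ m) ^ d)⁻¹ *
        (Mη * Mψ * V * (l⁻¹ * (2 : ℝ)⁻¹ ^ m) ^ r) := by gcongr
    _ = Mη * Mψ * V * ((2 : ℝ) ^ ((m : ℝ) * d / 2) * (l ^ d)⁻¹ * (((2 : ℝ) ^ m) ^ d)⁻¹ *
        (l⁻¹ * (2 : ℝ)⁻¹ ^ m) ^ r) := by ring
    _ = _ := by rw [hpow, ← mul_assoc]
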